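/- Every MDT-optimal schedule L satisfies T_κ(L) ≤ lcm(B)·|C| − 1 for all configurations κ ∈ K_BC, i.e., its worst-case discovery time is at most lcm(B)·|C| time slots. -/

import Mathlib

open scoped Classical

/-- A listening schedule over channel set `C`: a set of (channel, time-slot) pairs
such that all scanned channels belong to `C` and at most one channel is scanned
per time slot. -/
def IsSchedule (C : Finset ℕ) (L : Set (ℕ × ℕ)) : Prop :=
  (∀ p ∈ L, p.1 ∈ C) ∧ ∀ c c' t : ℕ, (c, t) ∈ L → (c', t) ∈ L → c = c'

/-- Configuration `(c, b, δ)` is discovered at time slot `t` by the schedule `L`. -/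
def DiscoveredAt (L : Set (ℕ × ℕ)) (c b δ t : ℕ) : Prop :=
  (c, t) ∈ L ∧ t % b = δ

/-- The discovery time `T_κ(L)` of configuration `κ = (c, b, δ)`: the least time slot
at which it is discovered (junk value `0` if it is never discovered). -/
noncomputable def discTime (L : Set (ℕ × ℕ)) (c b δ : ℕ) : ℕ :=
  sInf {t | DiscoveredAt L c b δ t}

/-- A schedule is complete if every configuration in `K_BC` is discovered at some slot. -/
def Complete (C B : Finset ℕ) (L : Set (ℕ × ℕ)) : Prop :=
  ∀ c ∈ C, ∀ b ∈ B, ∀ δ < b, ∃ t, DiscoveredAt L c b δ t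

/-- The set of all configurations `K_BC`, as a finite set of triples `(c, b, δ)`. -/
def KBC (C B : Finset ℕ) : Finset (ℕ × ℕ × ℕ) :=
  (C ×ˢ B ×ˢ Finset.range (B.sup id)).filter fun κ => κ.2.2 < κ.2.1

/-- The weight `P_κ = 1/(b·|B|·|C|)` of a configuration with beacon period `b`. -/
noncomputable def weight (C B : Finset ℕ) (b : ℕ) : ℝ :=
  (1 : ℝ) / ((b : ℝ) * (B.card : ℝ) * (C.card : ℝ))

/-- Total weight of configurations discovered by `L` at some slot `≤ t` (the NDoT curve). -/
noncomputable def discSum (C B : Finset ℕ) (L : Set (ℕ × ℕ)) (t : ℕ) : ℝ :=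
  ∑ κ ∈ (KBC C B).filter (fun κ => ∃ t' ≤ t, DiscoveredAt L κ.1 κ.2.1 κ.2.2 t'),
    weight C B κ.2.1

/-- The mean discovery time `MDT(L) = Σ_{κ ∈ K_BC} P_κ · T_κ(L)`. -/
noncomputable def MDT (C B : Finset ℕ) (L : Set (ℕ × ℕ)) : ℝ :=
  ∑ κ ∈ KBC C B, weight C B κ.2.1 * (discTime L κ.1 κ.2.1 κ.2.2 : ℝ)

/-- A schedule is recursive if it is complete and, for every `b ∈ B`, every
configuration with beacon period `b` has discovery time at most `b·|C| - 1`. -/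
def Recursive (C B : Finset ℕ) (L : Set (ℕ × ℕ)) : Prop :=
  Complete C B L ∧
  ∀ c ∈ C, ∀ b ∈ B, ∀ δ < b, discTime L c b δ ≤ b * C.card - 1

/-- `D(c,t)`: the expected number of new discoveries when scanning channel `c` at slot `t`,
i.e. the sum of weights of configurations `(c, b, t mod b)`, `b ∈ B`, not yet
discovered by `L` before slot `t`. -/
noncomputable def gain (C B : Finset ℕ) (L : Set (ℕ × ℕ)) (c t : ℕ) : ℝ :=
  ∑ b ∈ B.filter (fun b => ¬ ∃ t' < t, DiscoveredAt L c b (t % b) t'),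
    weight C B b

/-- A schedule is greedy if, whenever some channel has positive expected gain at slot `t`,
it scans a channel maximizing the expected gain at slot `t`. -/
def Greedy (C B : Finset ℕ) (L : Set (ℕ × ℕ)) : Prop :=
  IsSchedule C L ∧
  ∀ t : ℕ, (∃ c ∈ C, 0 < gain C B L c t) →
    ∃ c ∈ C, (c, t) ∈ L ∧ ∀ c' ∈ C, gain C B L c' t ≤ gain C B L c t

/-!
Let `M = lcm(B)`. Scanning `c` at slot `s` can only discover something new if it is the first scan
of `c` within the residue class of `s` modulo `M`. If some configuration were discovered only at a
slot `t ≥ M·|C|`, then more than `|C|` slots up to `t` would be congruent to `t`, so by pigeonhole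
one of them contains no first scan, and it lies before `t`. Reassigning that slot to the channel of
the late configuration delays no discovery and advances this one, hence strictly lowers the MDT.
-/

section FirstScan

/-- The scan of channel `c` at slot `s` is the first one in the residue class of `s` modulo `M`.
When `M` is a common multiple of the beacon periods, only such scans can discover a new
configuration. -/
def IsFirstScan (M : ℕ) (L : Set (ℕ × ℕ)) (c s : ℕ) : Prop :=
  (c, s) ∈ L ∧ ∀ s' < s, s' ≡ s [MOD M] → (c, s') ∉ L

variable {C : Finset ℕ} {L : Set (ℕ × ℕ)} {M b c δ s t : ℕ}

theorem IsFirstScan.eq_of_modEq (hs : IsFirstScan M L c s) (ht : IsFirstScan M L c t)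
    (hst : s ≡ t [MOD M]) : s = t := by
  rcases lt_trichotomy s t with hlt | heq | hgt
  · exact absurd hs.1 (ht.2 s hlt hst)
  · exact heq
  · exact absurd ht.1 (hs.2 t hgt hst.symm)

theorem card_filter_range_succ_modEq_self (hM : 0 < M) (t : ℕ) :
    ((Finset.range (t + 1)).filter (· ≡ t [MOD M])).card = t / M + 1 := by
  rw [← Nat.count_eq_card_filter_range, Nat.count_succ, Nat.count_modEq_card t hM,
    if_neg (lt_irrefl _), if_pos (Nat.ModEq.refl t), add_zero]

theorem exists_modEq_forall_not_isFirstScan (hL : ∀ p ∈ L, p.1 ∈ C) (hM : 0 < M)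
    (ht : M * C.card ≤ t) : ∃ s ≤ t, s ≡ t [MOD M] ∧ ∀ c, ¬ IsFirstScan M L c s := by
  by_contra! hfirst
  have hcard : ((Finset.range (t + 1)).filter (· ≡ t [MOD M])).card ≤ C.card := by
    refine Finset.card_le_card_of_forall_subsingleton (fun s c => IsFirstScan M L c s) ?_ ?_
    · intro s hs
      rw [Finset.mem_filter, Finset.mem_range_succ_iff] at hs
      obtain ⟨c, hc⟩ := hfirst s hs.1 hs.2
      exact ⟨c, hL _ hc.1, hc⟩
    · rintro c - s ⟨hs, hcs⟩ s' ⟨hs', hcs'⟩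
      exact hcs.eq_of_modEq hcs'
        ((Finset.mem_filter.1 hs).2.trans (Finset.mem_filter.1 hs').2.symm)
  rw [card_filter_range_succ_modEq_self hM] at hcard
  have hdiv : C.card ≤ t / M := (Nat.le_div_iff_mul_le hM).2 (mul_comm M _ ▸ ht)
  omega

theorem discTime_le (h : DiscoveredAt L c b δ t) : discTime L c b δ ≤ t :=
  Nat.sInf_le h

theorem discoveredAt_discTime (h : ∃ t, DiscoveredAt L c b δ t) :
    DiscoveredAt L c b δ (discTime L c b δ) :=
  Nat.sInf_mem h

theorem isFirstScan_discTime (hb : b ∣ M) (h : ∃ t, DiscoveredAt L c b δ t) :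
    IsFirstScan M L c (discTime L c b δ) := by
  obtain ⟨hmem, hmod⟩ := discoveredAt_discTime h
  refine ⟨hmem, fun s hs hsM hsL => ?_⟩
  have hdisc : DiscoveredAt L c b δ s := ⟨hsL, Eq.trans (hsM.of_dvd hb) hmod⟩
  exact (discTime_le hdisc).not_gt hs

end FirstScan

section Reassign

/-- The schedule obtained from `L` by scanning channel `c`, and nothing else, at slot `s`. -/
def reassign (L : Set (ℕ × ℕ)) (c s : ℕ) : Set (ℕ × ℕ) :=
  insert (c, s) {p ∈ L | p.2 ≠ s}

variable {C B : Finset ℕ} {L : Set (ℕ × ℕ)} {M b c c' δ s : ℕ}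

theorem IsSchedule.reassign (hL : IsSchedule C L) (hc : c ∈ C) (s : ℕ) :
    IsSchedule C (reassign L c s) := by
  refine ⟨?_, fun c₁ c₂ t h₁ h₂ => ?_⟩
  · rintro p (rfl | hp)
    exacts [hc, hL.1 p hp.1]
  · simp only [_root_.reassign, Set.mem_insert_iff, Prod.mk.injEq, Set.mem_ofPred_eq] at h₁ h₂
    rcases h₁ with ⟨rfl, rfl⟩ | ⟨h₁, hne₁⟩ <;> rcases h₂ with ⟨rfl, h₂⟩ | ⟨h₂, hne₂⟩
    exacts [rfl, absurd rfl hne₂, absurd h₂ hne₁, hL.2 c₁ c₂ t h₁ h₂]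

theorem discoveredAt_reassign_discTime (hs : ∀ c, ¬ IsFirstScan M L c s) (hb : b ∣ M)
    (h : ∃ t, DiscoveredAt L c' b δ t) :
    DiscoveredAt (reassign L c s) c' b δ (discTime L c' b δ) := by
  obtain ⟨hmem, hmod⟩ := discoveredAt_discTime h
  have hne : discTime L c' b δ ≠ s := fun heq => hs c' (heq ▸ isFirstScan_discTime hb h)
  exact ⟨Or.inr ⟨hmem, hne⟩, hmod⟩

theorem exists_schedule_discTime_lt (hL : IsSchedule C L) (hcomp : Complete C B L) (hM : 0 < M)
    (hdvd : ∀ b ∈ B, b ∣ M) (hc : c ∈ C) (hb : b ∈ B) (hδ : δ < b)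
    (hlate : M * C.card ≤ discTime L c b δ) :
    ∃ L', IsSchedule C L' ∧ Complete C B L' ∧
      (∀ c ∈ C, ∀ b ∈ B, ∀ δ < b, discTime L' c b δ ≤ discTime L c b δ) ∧
      discTime L' c b δ < discTime L c b δ := by
  have hκ := hcomp c hc b hb δ hδ
  obtain ⟨s, hst, hmod, hs⟩ := exists_modEq_forall_not_isFirstScan hL.1 hM hlate
  have hne : s ≠ discTime L c b δ := fun heq =>
    hs c (heq ▸ isFirstScan_discTime (hdvd b hb) hκ)
  have hdisc : ∀ c' ∈ C, ∀ b ∈ B, ∀ δ < b,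
      DiscoveredAt (reassign L c s) c' b δ (discTime L c' b δ) := fun c' hc' b hb δ hδ =>
    discoveredAt_reassign_discTime hs (hdvd b hb) (hcomp c' hc' b hb δ hδ)
  have hearly : DiscoveredAt (reassign L c s) c b δ s :=
    ⟨Set.mem_insert _ _, Eq.trans (hmod.of_dvd (hdvd b hb)) (discoveredAt_discTime hκ).2⟩
  exact ⟨reassign L c s, hL.reassign hc s,
    fun c' hc' b hb δ hδ => ⟨_, hdisc c' hc' b hb δ hδ⟩,
    fun c' hc' b hb δ hδ => discTime_le (hdisc c' hc' b hb δ hδ),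
    (discTime_le hearly).trans_lt (hst.lt_of_ne hne)⟩

end Reassign

section MDT

variable {C B : Finset ℕ} {L L' : Set (ℕ × ℕ)} {b c δ : ℕ}

theorem mem_KBC : (c, b, δ) ∈ KBC C B ↔ c ∈ C ∧ b ∈ B ∧ δ < b := by
  simp only [KBC, Finset.mem_filter, Finset.mem_product, Finset.mem_range]
  refine ⟨fun ⟨⟨hc, hb, _⟩, hδ⟩ => ⟨hc, hb, hδ⟩, fun ⟨hc, hb, hδ⟩ => ⟨⟨hc, hb, ?_⟩, hδ⟩⟩
  exact hδ.trans_le (Finset.le_sup (f := id) hb)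

theorem weight_pos (hC : C.Nonempty) (hB : B.Nonempty) (hb : 0 < b) : 0 < weight C B b := by
  unfold weight
  positivity

theorem MDT_lt_MDT
    (hle : ∀ c ∈ C, ∀ b ∈ B, ∀ δ < b, discTime L' c b δ ≤ discTime L c b δ)
    (hc : c ∈ C) (hb : b ∈ B) (hδ : δ < b) (hlt : discTime L' c b δ < discTime L c b δ) :
    MDT C B L' < MDT C B L := by
  have hweight : ∀ b, 0 < b → 0 < weight C B b := fun _ => weight_pos ⟨c, hc⟩ ⟨b, hb⟩
  refine Finset.sum_lt_sum ?_ ⟨(c, b, δ), mem_KBC.2 ⟨hc, hb, hδ⟩, ?_⟩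
  · rintro ⟨c', b', δ'⟩ hκ
    obtain ⟨hc', hb', hδ'⟩ := mem_KBC.1 hκ
    exact mul_le_mul_of_nonneg_left (Nat.cast_le.2 (hle c' hc' b' hb' δ' hδ'))
      (hweight b' (Nat.zero_lt_of_lt hδ')).le
  · exact mul_lt_mul_of_pos_left (Nat.cast_lt.2 hlt) (hweight b (Nat.zero_lt_of_lt hδ))

end MDT

/-- every MDT-optimal schedule has all discovery times at most
`lcm(B)·|C| − 1`. -/
theorem stmt16 (C B : Finset ℕ) (hC : C.Nonempty) (hB : B.Nonempty)
    (hBpos : ∀ b ∈ B, 0 < b)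
    (L : Set (ℕ × ℕ)) (hL : IsSchedule C L) (hcomp : Complete C B L)
    (hopt : ∀ L' : Set (ℕ × ℕ), IsSchedule C L' → Complete C B L' →
      MDT C B L ≤ MDT C B L') :
    ∀ c ∈ C, ∀ b ∈ B, ∀ δ < b, discTime L c b δ ≤ B.lcm id * C.card - 1 := by
  intro c hc b hb δ hδ
  have hM : 0 < B.lcm id :=
    Nat.pos_of_ne_zero (Finset.lcm_ne_zero_iff.2 fun b hb => (hBpos b hb).ne')
  have hdvd : ∀ b ∈ B, b ∣ B.lcm id := fun _ hb => Finset.dvd_lcm hb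
  refine Nat.le_sub_one_of_lt (lt_of_not_ge fun hlate => ?_)
  obtain ⟨L', hL', hcomp', hle, hlt⟩ :=
    exists_schedule_discTime_lt hL hcomp hM hdvd hc hb hδ hlate
  exact (hopt L' hL' hcomp').not_gt (MDT_lt_MDT hle hc hb hδ hlt)
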